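/- arXiv:cond-mat/0607513 — 2 statements merged into one kernel-verified Lean document; each statement's English description precedes it below -/
import Mathlib

section
/- Fix an integer w ≥ 1, weights a, b, c > 0, and 0 ≤ m ≤ w. Define the relation R on m-element subsets of ZMod w by: S R T iff Z_{S,T}(w,1) > 0, i.e. there exists an ice configuration of a single cyclic row whose top row of vertical bonds is the indicator of S and whose bottom row is the indicator of T. Then for any two m-element subsets S, T ⊆ ZMod w there is a chain S = S₀ R S₁ R ⋯ R S_n = T with n ≤ 2m (and if n < 2m the chain can be padded, since S R S always holds via the row with no horizontal lines). -/
/-!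
Moving a single line, from a site `p` that is occupied to a site `q` that is empty, is always
one admissible step: the horizontal lines fill the cyclic arc `[q, p)`, and the ice rule only has
to be checked at the two ends of the arc (`zfix_pos_replace`). Lines sitting inside the arc do not
obstruct the move, since a vertex with all four bonds occupied is allowed. Hence `S` can be turned
into `T` by replacing the elements of `S \ T` one at a time by elements of `T \ S`
(`exists_chain`), which takes `#(S \ T) ≤ m ≤ 2 * m` steps.
-/

open Filter Finset

/-- Weight of a vertex of the six-vertex model with incident line indicators
`t` (top vertical bond), `bo` (bottom vertical bond), `r` (right horizontal bond),
`l` (left horizontal bond): weight `a` if no or all four bonds carry lines, `b` if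
exactly the two vertical or exactly the two horizontal bonds carry lines, and `c` if
exactly one vertical and one horizontal bond carry lines. -/
def vweight (a b c : ℝ) (t bo r l : Bool) : ℝ :=
  if t = bo ∧ r = l then (if t = r then a else b) else c

/-- The ice rule on the `w × h` cylinder: at every vertex `(i, j)` the number of lines on the
top vertical bond and the right horizontal bond equals the number of lines on the bottom
vertical bond and the left horizontal bond. -/
def IceCyl (w h : ℕ) (σv : ZMod w × Fin (h + 1) → Bool) (σh : ZMod w × Fin h → Bool) : Prop :=
  ∀ (i : ZMod w) (j : Fin h),
    ((if σv (i, j.castSucc) then 1 else 0) + (if σh (i, j) then 1 else 0) : ℕ) =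
      (if σv (i, j.succ) then 1 else 0) + (if σh (i - 1, j) then 1 else 0)

open Classical in
/-- Fixed-boundary partition function `Z_{S,T}(w,h)` of the six-vertex model on the `w × h`
cylinder: the sum over all ice configurations whose row `0` of vertical bonds is the indicator
of `S` and whose row `h` is the indicator of `T`, of the product of the weights of all
`w·h` vertices.  (Junk value `0` when `w = 0`.) -/
noncomputable def Zfix (w h : ℕ) (a b c : ℝ) (S T : Finset (ZMod w)) : ℝ :=
  if hw : w = 0 then 0 else
    haveI : NeZero w := ⟨hw⟩
    ∑ σ : (ZMod w × Fin (h + 1) → Bool) × (ZMod w × Fin h → Bool),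
      if IceCyl w h σ.1 σ.2 ∧ (∀ i : ZMod w, (σ.1 (i, 0) = true ↔ i ∈ S)) ∧
          (∀ i : ZMod w, (σ.1 (i, Fin.last h) = true ↔ i ∈ T)) then
        ∏ i : ZMod w, ∏ j : Fin h,
          vweight a b c (σ.1 (i, j.castSucc)) (σ.1 (i, j.succ)) (σ.2 (i, j)) (σ.2 (i - 1, j))
      else 0

lemma vweight_pos {a b c : ℝ} (ha : 0 < a) (hb : 0 < b) (hc : 0 < c) (t bo r l : Bool) :
    0 < vweight a b c t bo r l := by
  unfold vweight
  split_ifs <;> assumption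

/-- One horizontal row `g` satisfying the ice rule between `S` and `T` makes the one-row
partition function positive: all vertex weights are positive, so no cancellation occurs. -/
lemma zfix_one_pos {w : ℕ} [NeZero w] {a b c : ℝ} (ha : 0 < a) (hb : 0 < b) (hc : 0 < c)
    (S T : Finset (ZMod w)) (g : ZMod w → Bool)
    (hg : ∀ i, ((if i ∈ S then 1 else 0) + (if g i then 1 else 0) : ℕ) =
      (if i ∈ T then 1 else 0) + (if g (i - 1) then 1 else 0)) :
    0 < Zfix w 1 a b c S T := by
  classical
  unfold Zfix
  rw [dif_neg (NeZero.ne w)]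
  refine Finset.sum_pos' ?_ ⟨(fun x => if x.2 = 0 then decide (x.1 ∈ S) else decide (x.1 ∈ T),
    fun x => g x.1), Finset.mem_univ _, ?_⟩
  · intro σ _
    split_ifs
    · exact Finset.prod_nonneg fun i _ => Finset.prod_nonneg fun j _ =>
        (vweight_pos ha hb hc _ _ _ _).le
    · exact le_rfl
  · rw [if_pos]
    · exact Finset.prod_pos fun i _ => Finset.prod_pos fun j _ => vweight_pos ha hb hc _ _ _ _
    · refine ⟨?_, ?_, ?_⟩
      · intro i j
        obtain rfl : j = 0 := Subsingleton.elim _ _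
        simpa using hg i
      · intro i
        simp
      · intro i
        simp

lemma zfix_pos_self {w : ℕ} [NeZero w] {a b c : ℝ} (ha : 0 < a) (hb : 0 < b) (hc : 0 < c)
    (U : Finset (ZMod w)) : 0 < Zfix w 1 a b c U U :=
  zfix_one_pos ha hb hc U U (fun _ => false) fun _ => rfl

/-- Replacing one occupied site `p` by one empty site `q` is a single admissible step. -/
lemma zfix_pos_replace {w : ℕ} [NeZero w] {a b c : ℝ} (ha : 0 < a) (hb : 0 < b) (hc : 0 < c)
    (S : Finset (ZMod w)) {p q : ZMod w} (hp : p ∈ S) (hq : q ∉ S) :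
    0 < Zfix w 1 a b c S (insert q (S.erase p)) := by
  have hpq : p ≠ q := fun h => hq (h ▸ hp)
  -- The horizontal lines occupy the cyclic arc `[q, p)`.
  refine zfix_one_pos ha hb hc _ _ (fun i => decide ((i - q).val < (p - q).val)) fun i => ?_
  have hd : 0 < (p - q).val := by
    rw [Nat.pos_iff_ne_zero, Ne, ZMod.val_eq_zero, sub_eq_zero]
    exact hpq
  have hdw : (p - q).val < w := ZMod.val_lt _
  by_cases hiq : i = q
  · subst hiq
    have h1 : w ≤ (-1 : ZMod w).val + 1 := by
      obtain ⟨n, rfl⟩ := Nat.exists_eq_succ_of_ne_zero (NeZero.ne w)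
      rw [ZMod.val_neg_one]
    have h2 : (p - i).val ≤ (-1 : ZMod w).val := by omega
    simp [hq, hd, h2]
  · have hj : (i - q).val ≠ 0 := by
      rw [Ne, ZMod.val_eq_zero, sub_eq_zero]
      exact hiq
    have h1 : (i - 1 - q).val + 1 = (i - q).val := by
      have hlt : (i - q).val < w := ZMod.val_lt _
      have : i - 1 - q = (((i - q).val - 1 : ℕ) : ZMod w) := by
        rw [Nat.cast_sub (by omega), ZMod.natCast_zmod_val]
        push_cast
        ring
      rw [this, ZMod.val_cast_of_lt (by omega)]
      omega
    by_cases hip : i = p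
    · subst hip
      have h2 : (i - 1 - q).val < (i - q).val := by omega
      simp [hp, hiq, h2]
    · have h3 : (i - q).val ≠ (p - q).val := by
        intro h
        exact hip (sub_left_injective (ZMod.val_injective w h))
      have h4 : (i - 1 - q).val < (p - q).val ↔ (i - q).val < (p - q).val := by omega
      simp [hiq, hip, h4]

/-- Replacing the elements of `S \ T` one at a time yields a chain of length `#(S \ T)`. -/
lemma exists_chain {w : ℕ} [NeZero w] {a b c : ℝ} (ha : 0 < a) (hb : 0 < b) (hc : 0 < c)
    (m : ℕ) (T : Finset (ZMod w)) (hT : T.card = m) (n : ℕ) :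
    ∀ S : Finset (ZMod w), S.card = m → (S \ T).card = n →
    ∃ chain : ℕ → Finset (ZMod w), chain 0 = S ∧ chain n = T ∧
      (∀ k ≤ n, (chain k).card = m) ∧
      (∀ k < n, 0 < Zfix w 1 a b c (chain k) (chain (k + 1))) := by
  induction n with
  | zero =>
    intro S hS h
    have hST : S = T := Finset.eq_of_subset_of_card_le
      (Finset.sdiff_eq_empty_iff_subset.1 (Finset.card_eq_zero.1 h)) (by omega)
    exact ⟨fun _ => S, rfl, hST, fun _ _ => hS, fun k hk => absurd hk (Nat.not_lt_zero k)⟩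
  | succ n ih =>
    intro S hS h
    have hTS : (T \ S).card = n + 1 := by
      rw [← h]
      exact Finset.card_sdiff_comm (hT.trans hS.symm)
    obtain ⟨p, hp⟩ := Finset.card_pos.1 (show 0 < (S \ T).card by omega)
    obtain ⟨q, hq⟩ := Finset.card_pos.1 (show 0 < (T \ S).card by omega)
    rw [Finset.mem_sdiff] at hp hq
    obtain ⟨chain, h0, hn, hcard, hstep⟩ := ih (insert q (S.erase p))
      (by
        have hpos := Finset.card_pos.2 ⟨p, hp.1⟩
        rw [Finset.card_insert_of_notMem (fun hmem => hq.2 (Finset.mem_of_mem_erase hmem)),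
          Finset.card_erase_of_mem hp.1]
        omega)
      (by
        rw [Finset.insert_sdiff_of_mem _ hq.1, Finset.erase_sdiff_comm,
          Finset.card_erase_of_mem (Finset.mem_sdiff.2 hp), h]
        rfl)
    refine ⟨fun k => Nat.casesOn k S chain, rfl, hn, ?_, ?_⟩
    · rintro (_ | k) hk
      · exact hS
      · exact hcard k (by omega)
    · rintro (_ | k) hk
      · change 0 < Zfix w 1 a b c S (chain 0)
        rw [h0]
        exact zfix_pos_replace ha hb hc S hp.1 hq.2
      · exact hstep k (by omega)

/-- Lemma 1: on the cyclic row of width `w`, any two `m`-element line configurations `S`, `T`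
are connected by a chain of at most `2m` positive-weight transfer-matrix steps through
`m`-element configurations; moreover every `m`-element configuration is related to itself
(the row with no horizontal lines), so the chain can be padded to length exactly `2m`. -/
theorem chain_between_configs (w : ℕ) [NeZero w]
    (a b c : ℝ) (ha : 0 < a) (hb : 0 < b) (hc : 0 < c)
    (m : ℕ) (hm : m ≤ w) (S T : Finset (ZMod w)) (hS : S.card = m) (hT : T.card = m) :
    (∃ n ≤ 2 * m, ∃ chain : ℕ → Finset (ZMod w),
      chain 0 = S ∧ chain n = T ∧
      (∀ k ≤ n, (chain k).card = m) ∧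
      (∀ k < n, 0 < Zfix w 1 a b c (chain k) (chain (k + 1)))) ∧
    (∀ U : Finset (ZMod w), U.card = m → 0 < Zfix w 1 a b c U U) := by
  obtain ⟨chain, h⟩ := exists_chain ha hb hc m T hT (S \ T).card S hS rfl
  have hle : (S \ T).card ≤ S.card := Finset.card_le_card Finset.sdiff_subset
  exact ⟨⟨(S \ T).card, by omega, chain, h⟩, fun U _ => zfix_pos_self ha hb hc U⟩
end

section
/- Fix an integer w ≥ 2, weights a, b, c > 0, and 1 ≤ m ≤ w−1. Then every entry of the matrix (V_m(w))^{2m} is strictly positive; consequently the nonnegative matrix V_m(w) is irreducible, i.e. for any two m-element subsets S, T ⊆ ZMod w there exists n ≥ 1 with ((V_m(w))^n)_{T,S} > 0. -/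
/-!
The entry `V_{T,S}` is a sum of nonnegative terms, so it is positive as soon as one row of
horizontal bonds is compatible with `S` above and `T` below (`Zfix_one_pos`). Two cases suffice:

* `T = S`, with no horizontal line at all;
* `T = (S \ {q}) ∪ {p}` with `q ∈ S`, `p ∉ S`, where the horizontal line occupies the cyclic arc
  from `p` to `q - 1`. Other lines met along the arc do no harm, since a vertex with all four
  bonds occupied is allowed. So any single line can jump to any vacant position in one row.

If `S` and `T` have `m` elements, moving the elements of `S \ T` one by one onto `T \ S` joins `S`
to `T` in `#(S \ T) ≤ m` rows, and stationary rows pad this path to any larger length. Hence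
`V_m ^ n` has positive entries for every `n ≥ m` (`Vm_pow_pos`), in particular for `n = 2m`.
-/

open Filter Finset

/-- The block `V_m(w)` of the row transfer matrix of the six-vertex model on the cyclic row of
width `w`, indexed by `m`-element subsets of `ZMod w`, with entries `(V_m)_{T,S} = Z_{S,T}(w,1)`. -/
noncomputable def Vm (w : ℕ) (a b c : ℝ) (m : ℕ) :
    Matrix {S : Finset (ZMod w) // S.card = m} {S : Finset (ZMod w) // S.card = m} ℝ :=
  fun T S => Zfix w 1 a b c S.1 T.1

lemma Zfix_nonneg (w h : ℕ) {a b c : ℝ} (ha : 0 < a) (hb : 0 < b) (hc : 0 < c)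
    (S T : Finset (ZMod w)) : 0 ≤ Zfix w h a b c S T := by
  unfold Zfix
  split_ifs with hw
  · exact le_rfl
  · refine Finset.sum_nonneg fun σ _ => ?_
    split_ifs
    · exact Finset.prod_nonneg fun i _ => Finset.prod_nonneg fun j _ =>
        (vweight_pos ha hb hc _ _ _ _).le
    · exact le_rfl

/-- A single row of horizontal bonds `g` compatible with `S` and `T` makes `Z_{S,T}(w,1)`
positive. -/
lemma Zfix_one_pos (w : ℕ) [NeZero w] {a b c : ℝ} (ha : 0 < a) (hb : 0 < b) (hc : 0 < c)
    (S T : Finset (ZMod w)) (g : ZMod w → Bool)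
    (hg : ∀ i, ((if i ∈ S then 1 else 0) + (if g i then 1 else 0) : ℕ) =
      (if i ∈ T then 1 else 0) + (if g (i - 1) then 1 else 0)) :
    0 < Zfix w 1 a b c S T := by
  unfold Zfix
  rw [dif_neg (NeZero.ne w)]
  refine Finset.sum_pos' (fun σ _ => ?_)
    ⟨(fun x => if x.2 = 0 then decide (x.1 ∈ S) else decide (x.1 ∈ T), fun x => g x.1),
      Finset.mem_univ _, ?_⟩
  · split_ifs
    · exact Finset.prod_nonneg fun i _ => Finset.prod_nonneg fun j _ =>
        (vweight_pos ha hb hc _ _ _ _).le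
    · exact le_rfl
  · rw [if_pos]
    · exact Finset.prod_pos fun i _ => Finset.prod_pos fun j _ => vweight_pos ha hb hc _ _ _ _
    · refine ⟨fun i j => ?_, fun i => by simp, fun i => by simp⟩
      have hj : j = 0 := Subsingleton.elim _ _
      subst hj
      simpa using hg i

lemma Zfix_one_self_pos (w : ℕ) [NeZero w] {a b c : ℝ} (ha : 0 < a) (hb : 0 < b) (hc : 0 < c)
    (S : Finset (ZMod w)) : 0 < Zfix w 1 a b c S S :=
  Zfix_one_pos w ha hb hc S S (fun _ => false) fun _ => rfl

lemma val_sub_one_add_one {w : ℕ} [NeZero w] {x : ZMod w} (hx : x ≠ 0) :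
    (x - 1).val + 1 = x.val := by
  have h0 : x.val ≠ 0 := (ZMod.val_ne_zero x).2 hx
  have hlt := ZMod.val_lt x
  have : x - 1 = ((x.val - 1 : ℕ) : ZMod w) := by
    rw [Nat.cast_sub (by omega), ZMod.natCast_zmod_val, Nat.cast_one]
  rw [this, ZMod.val_natCast_of_lt (by omega)]
  omega

/-- One line can jump from any occupied position `q` to any vacant position `p` in one row. -/
lemma Zfix_one_jump_pos (w : ℕ) [NeZero w] {a b c : ℝ} (ha : 0 < a) (hb : 0 < b) (hc : 0 < c)
    (S : Finset (ZMod w)) {p q : ZMod w} (hp : p ∉ S) (hq : q ∈ S) :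
    0 < Zfix w 1 a b c S (insert p (S.erase q)) := by
  have hpq : q ≠ p := fun h => hp (h ▸ hq)
  have hd : (q - p).val ≠ 0 := (ZMod.val_ne_zero _).2 (sub_ne_zero.2 hpq)
  -- The horizontal line occupies the arc `p, p + 1, …, q - 1`.
  refine Zfix_one_pos w ha hb hc _ _ (fun i => decide ((i - p).val < (q - p).val)) fun i => ?_
  have hi : i - 1 - p = i - p - 1 := by ring
  simp only [hi]
  by_cases hip : i = p
  · subst hip
    -- To the left of `p` the arc coordinate is `-1`, whose value `w - 1` is maximal.
    have h1 : (q - i).val ≤ (-1 : ZMod w).val := by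
      have h := ZMod.val_lt (q - i)
      obtain ⟨n, rfl⟩ := Nat.exists_eq_succ_of_ne_zero (NeZero.ne w)
      rw [ZMod.val_neg_one]
      omega
    simp [hp, h1, Nat.pos_of_ne_zero hd]
  · have hv := val_sub_one_add_one (sub_ne_zero.2 hip)
    by_cases hiq : i = q
    · subst hiq
      have h1 : (i - p - 1).val < (i - p).val := by omega
      simp [hq, hip, h1]
    · have hne : (i - p).val ≠ (q - p).val := fun h =>
        hiq (sub_left_injective (ZMod.val_injective w h))
      have h1 : (i - p - 1).val < (q - p).val ↔ (i - p).val < (q - p).val := by omega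
      simp [hip, hiq, h1]

/-- `n` rows suffice to join `S` to `T` whenever at most `n` elements of `S` lie outside `T`. -/
lemma Vm_pow_pos (w : ℕ) [NeZero w] {a b c : ℝ} (ha : 0 < a) (hb : 0 < b) (hc : 0 < c)
    (m n : ℕ) (S T : {S : Finset (ZMod w) // S.card = m}) (h : (S.1 \ T.1).card ≤ n) :
    0 < (Vm w a b c m ^ n) T S := by
  have hnonneg : ∀ (k : ℕ) (A B : {S : Finset (ZMod w) // S.card = m}),
      0 ≤ (Vm w a b c m ^ k) A B := by
    intro k
    induction k with
    | zero => intro A B; rw [pow_zero, Matrix.one_apply]; split_ifs <;> norm_num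
    | succ k ih =>
      intro A B
      rw [pow_succ, Matrix.mul_apply]
      exact Finset.sum_nonneg fun X _ => mul_nonneg (ih A X) (Zfix_nonneg w 1 ha hb hc _ _)
  -- A first row from `S` to `R` with `V_{R,S} > 0`, followed by `k` rows from `R` to `T`.
  have step : ∀ (k : ℕ) (S R T : {S : Finset (ZMod w) // S.card = m}),
      0 < Vm w a b c m R S → 0 < (Vm w a b c m ^ k) T R → 0 < (Vm w a b c m ^ (k + 1)) T S := by
    intro k S R T h1 h2
    rw [pow_succ, Matrix.mul_apply]
    exact Finset.sum_pos'
      (fun X _ => mul_nonneg (hnonneg k T X) (Zfix_nonneg w 1 ha hb hc _ _))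
      ⟨R, Finset.mem_univ _, mul_pos h2 h1⟩
  induction n generalizing S with
  | zero =>
    have hsub : S.1 ⊆ T.1 := by
      rw [← Finset.sdiff_eq_empty_iff_subset, ← Finset.card_eq_zero]; omega
    have hST : S = T := Subtype.ext (Finset.eq_of_subset_of_card_le hsub (by rw [S.2, T.2]))
    subst hST
    simp
  | succ n ih =>
    by_cases hc0 : (S.1 \ T.1).card = 0
    · exact step n S S T (Zfix_one_self_pos w ha hb hc S.1) (ih S (by omega))
    · have hcard : (T.1 \ S.1).card = (S.1 \ T.1).card :=
        Finset.card_sdiff_comm (by rw [S.2, T.2])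
      obtain ⟨q, hq⟩ := Finset.card_pos.1 (Nat.pos_of_ne_zero hc0)
      obtain ⟨p, hp⟩ := Finset.card_pos.1 (hcard ▸ Nat.pos_of_ne_zero hc0)
      have hq' := Finset.mem_sdiff.1 hq
      have hp' := Finset.mem_sdiff.1 hp
      have hR : (insert p (S.1.erase q)).card = m := by
        have hpos := Finset.card_pos.2 ⟨q, hq'.1⟩
        have hS := S.2
        rw [Finset.card_insert_of_notMem (fun hmem => hp'.2 (Finset.mem_of_mem_erase hmem)),
          Finset.card_erase_of_mem hq'.1]
        omega
      refine step n S ⟨insert p (S.1.erase q), hR⟩ T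
        (Zfix_one_jump_pos w ha hb hc S.1 hp'.2 hq'.1) (ih _ ?_)
      have hdiff : insert p (S.1.erase q) \ T.1 = (S.1 \ T.1).erase q := by
        rw [Finset.insert_sdiff_of_mem _ hp'.1, Finset.erase_sdiff_comm]
      change (insert p (S.1.erase q) \ T.1).card ≤ n
      rw [hdiff, Finset.card_erase_of_mem hq]
      omega

/-- Proposition 3(i): for `2 ≤ w`, `1 ≤ m ≤ w − 1` and positive weights, every entry of
`(V_m(w))^(2m)` is strictly positive; consequently the nonnegative matrix `V_m(w)` is
irreducible. -/
theorem Vm_pow_pos_and_irreducible (w : ℕ) [NeZero w] (hw : 2 ≤ w)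
    (a b c : ℝ) (ha : 0 < a) (hb : 0 < b) (hc : 0 < c)
    (m : ℕ) (hm1 : 1 ≤ m) (hm2 : m ≤ w - 1) :
    (∀ S T : {S : Finset (ZMod w) // S.card = m}, 0 < (Vm w a b c m ^ (2 * m)) T S) ∧
    (∀ S T : {S : Finset (ZMod w) // S.card = m},
      ∃ n : ℕ, 1 ≤ n ∧ 0 < (Vm w a b c m ^ n) T S) := by
  have key : ∀ S T : {S : Finset (ZMod w) // S.card = m},
      0 < (Vm w a b c m ^ (2 * m)) T S := fun S T =>
    Vm_pow_pos w ha hb hc m (2 * m) S T <| by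
      have h := Finset.card_le_card (Finset.sdiff_subset (s := S.1) (t := T.1))
      rw [S.2] at h
      omega
  exact ⟨key, fun S T => ⟨2 * m, by omega, key S T⟩⟩
end
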